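/- arXiv:2309.04219 — 3 statements merged into one kernel-verified Lean document; each statement's English description precedes it below -/
import Mathlib

section
/- Let m be a positive integer, n = 2m + 1, and F₂(X) = X^{2^m − 1} on F_{2^n}. Then the number of vanishing flats of F₂ is #VB_{n,F₂} = ((2^{n−2} + 7)/6 − K(1)/8)·(2^n − 1) if m ≡ 1 (mod 3), and #VB_{n,F₂} = ((2^{n−2} + 1)/6 − K(1)/8)·(2^n − 1) if m ≢ 1 (mod 3). -/
/-!
Write `q = 2^m`, `n = 2m + 1`, `y = x^q`, `χ(a) = (-1)^Tr(a)`, and `D(x) = x^(q-1) + (x+1)^(q-1)`.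

Ordering three points of a flat, and scaling the direction given by the first two of them to `1`,
gives `24 · #VB = (2^n - 1) · N` (`flats_card_mul`, `triples_card`), where `N` is the number of pairs
`(x, z)` with `D(x) = D(z)` and `z ∉ {x, x+1}`. So the fibres of `D` have to be determined.

Outside `𝔽₂` one has `D(x) = (x^q + x)/(x² + x)`, while `D = 1` on `𝔽₂`. The fibre over `1` consists
of `𝔽₂` and the solutions of `x^q = x²`; these lie in `𝔽₈`, so that there are six of them outside `𝔽₂`
if `m ≡ 1 mod 3` and none otherwise (`base_fibre_card`).

Let `x ∉ 𝔽₂`, and put `u = x² + x`, `d = x + y`, `w = y² + y`. If `z ∉ ⟨1, x⟩` lies on the fibre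
through `x`, then applying `a ↦ a^(2q)`, the inverse of `a ↦ a^q`, to the relation between `x` and `z`
shows that `r = (z² + z)/u` satisfies `r² + r = u w²/(d⁴ (d + w))` (`ratio_equation`). This
Artin–Schreier equation has the explicit solution `w/d² + ∑_{i ≤ m} d^(-2^i)` (`conjRatio`), and the
equation `t² + t = u r` has in turn an explicit solution `t` (`conjPoint`). Hence the only candidates
for `z` form the coset `t + ⟨1, x⟩`, and they do lie on the fibre exactly when
`Tr(1/d) = Tr(xy/d) = 1` (`conjPoint_defect`, `mem_fibre_iff`).

The number of such `x` follows from character sums (`card_fullFibre`). The map `x ↦ x + x^q` is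
two-to-one onto the elements of trace zero, so `∑ χ(1/d) = K(1)`; the substitution `x ↦ 1/x` gives
`∑ χ(xy/d) = K(1)`; and `x ↦ x + 1` reduces the mixed sum `∑ χ((xy + 1)/d)` to `-∑ χ(xy/d)` over
`x ∉ 𝔽₂`. The number `C` of these `x` therefore satisfies `4C = 2^n + 4 - 3K(1)`.
-/

open scoped Classical

/-- The set of vanishing flats of `F`: 4-element subsets `{x₁,x₂,x₃,x₄}` of pairwise
distinct elements with `x₁+x₂+x₃+x₄ = 0` and `F(x₁)+F(x₂)+F(x₃)+F(x₄) = 0`. -/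
def vanishingFlats {K : Type*} [Field K] (F : K → K) : Set (Finset K) :=
  {s : Finset K | s.card = 4 ∧ (∑ x ∈ s, x) = 0 ∧ (∑ x ∈ s, F x) = 0}

/-- The Kloosterman sum `K(1) = Σ_{x ∈ F_{2^n}} (−1)^{Tr(x⁻¹ + x)}` over `F_{2^n}`,
with the convention `0⁻¹ = 0`. -/
noncomputable def kloosterman (n : ℕ) : ℤ :=
  letI : Fintype (GaloisField 2 n) := Fintype.ofFinite _
  ∑ x : GaloisField 2 n,
    (-1 : ℤ) ^ (Algebra.trace (ZMod 2) (GaloisField 2 n) (x⁻¹ + x)).val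

/-! ### Partial traces and the Artin–Schreier equation of a fibre -/

/-- The partial trace `a + a² + a⁴ + ⋯ + a^(2^(k-1))`, with `k` terms. For `k = [K : 𝔽₂]` it is the
absolute trace, viewed as an element of `K`. -/
def partialTrace {K : Type*} [Field K] (k : ℕ) (a : K) : K :=
  ∑ i ∈ Finset.range k, a ^ 2 ^ i

section Algebra

variable {K : Type*} [Field K] [CharP K 2]

lemma partialTrace_add (k : ℕ) (a b : K) :
    partialTrace k (a + b) = partialTrace k a + partialTrace k b := by
  simp only [partialTrace, add_pow_char_pow, Finset.sum_add_distrib]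

lemma partialTrace_pow (k l : ℕ) (a : K) :
    partialTrace k a ^ 2 ^ l = partialTrace k (a ^ 2 ^ l) := by
  simp only [partialTrace, sum_pow_char_pow]
  refine Finset.sum_congr rfl fun i _ => ?_
  rw [← pow_mul, ← pow_mul, mul_comm]

lemma partialTrace_split (k l : ℕ) (a : K) :
    partialTrace (k + l) a = partialTrace k a + partialTrace l (a ^ 2 ^ k) := by
  simp only [partialTrace, Finset.sum_range_add, ← pow_mul, pow_add]

lemma partialTrace_succ (k : ℕ) (a : K) :
    partialTrace (k + 1) a = partialTrace k a + a ^ 2 ^ k := by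
  simp [partialTrace, Finset.sum_range_succ]

/-- Telescoping: the partial trace inverts `t ↦ t² + t` on elements of the form `a^(2^k) + a`. -/
lemma partialTrace_sq_add (k : ℕ) (a : K) :
    partialTrace k a ^ 2 + partialTrace k a = a ^ 2 ^ k + a := by
  have h1 := partialTrace_succ k a
  have h2 := partialTrace_split 1 k a
  have h3 := partialTrace_pow k 1 a
  have h4 : partialTrace 1 a = a := by simp [partialTrace]
  rw [add_comm 1 k] at h2
  simp only [pow_one] at h2 h3
  grind

lemma two_cases_of_sq {a : K} (h : a ^ 2 = a) : a = 0 ∨ a = 1 := by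
  have : a * (a - 1) = 0 := by linear_combination h
  rcases mul_eq_zero.1 this with h | h
  · exact Or.inl h
  · exact Or.inr (sub_eq_zero.1 h)

lemma two_cases_of_artinSchreier {a b : K} (h : a ^ 2 + a = b ^ 2 + b) : a = b ∨ a = b + 1 := by
  have : (a + b) ^ 2 = a + b := by grind
  rcases two_cases_of_sq this with h | h <;> [left; right] <;> grind

variable {m : ℕ}

section

variable (hF : ∀ a : K, a ^ 2 ^ (2 * m + 1) = a)
include hF

lemma frob_frob (a : K) : ((a ^ 2 ^ m) ^ 2 ^ m) ^ 2 = a := by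
  rw [← pow_mul, ← pow_mul]
  convert hF a using 2
  ring

lemma frob_inj {a b : K} (h : a ^ 2 ^ m = b ^ 2 ^ m) : a = b := by
  rw [← frob_frob hF a, h, frob_frob hF b]

/-- As `gcd(m, 2m+1) = 1`, the only fixed points of `a ↦ a^(2^m)` are `0` and `1`. -/
lemma frob_fixed {a : K} (h : a ^ 2 ^ m = a) : a = 0 ∨ a = 1 := by
  have := frob_frob hF a
  rw [h, h] at this
  exact two_cases_of_sq this

lemma trace_cases (a : K) :
    partialTrace (2 * m + 1) a = 0 ∨ partialTrace (2 * m + 1) a = 1 := by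
  apply two_cases_of_sq
  have := partialTrace_sq_add (2 * m + 1) a
  rw [hF a] at this
  grind

lemma trace_frob (a : K) :
    partialTrace (2 * m + 1) (a ^ 2 ^ m) = partialTrace (2 * m + 1) a := by
  rw [← partialTrace_pow]
  rcases trace_cases hF a with h | h <;> simp [h]

lemma trace_one : partialTrace (2 * m + 1) (1 : K) = 1 := by
  have : (2 : K) = 0 := CharTwo.two_eq_zero
  simp [partialTrace, this]

lemma add_frob_ne_zero {x : K} (h0 : x ≠ 0) (h1 : x ≠ 1) : x + x ^ 2 ^ m ≠ 0 := by
  intro h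
  rcases frob_fixed hF (a := x) (by grind) with h | h <;> contradiction

/-- The Artin–Schreier equation behind the count: if `x` and `z` lie in the same fibre of the
derivative, i.e. `(z^q + z)/(z² + z) = (x^q + x)/(x² + x)` with `q = 2^m`, and `z ∉ ⟨1, x⟩`, then
`r = (z² + z)/(x² + x)` satisfies this equation. Here `d = x + x^q`, `w = (x² + x)^q`, and
`r² + r ≠ 0` expresses `z ∉ ⟨1, x⟩`. -/
lemma ratio_equation {x z d w r : K} (h0 : x ≠ 0) (h1 : x ≠ 1)
    (hd : d = x + x ^ 2 ^ m) (hw : w = (x ^ 2 ^ m) ^ 2 + x ^ 2 ^ m)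
    (hz : z ^ 2 + z = (x ^ 2 + x) * r) (hzz : z ^ 2 ^ m + z = d * r) (hr : r ^ 2 + r ≠ 0) :
    (d + w) * d ^ 4 * (r ^ 2 + r) = w ^ 2 * (x ^ 2 + x) := by
  have hu : x ^ 2 + x ≠ 0 := by grind
  -- the relation with `r` eliminated, and its image under `a ↦ a^(2q)`
  have e : d * (z ^ 2 + z) = (x ^ 2 + x) * (z ^ 2 ^ m + z) := by grind
  have e' := congrArg (fun a => (a ^ 2 ^ m) ^ 2) e
  have hx2 := frob_frob hF x
  have hz2 := frob_frob hF z
  have c (a : K) : (a ^ 2) ^ 2 ^ m = (a ^ 2 ^ m) ^ 2 := by rw [← pow_mul, ← pow_mul, mul_comm]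
  simp only [hd, add_pow_char_pow, mul_pow, c] at e'
  generalize x ^ 2 ^ m = y at *
  generalize z ^ 2 ^ m = Y at *
  have k : (y ^ 2 + x) * ((Y ^ 2 + Y) ^ 2) = (y ^ 2 + y) ^ 2 * (Y ^ 2 + z) := by grind
  have hY : Y = z + d * r := by grind
  have k1 : Y ^ 2 + z = (x ^ 2 + x) * r + d ^ 2 * r ^ 2 := by grind
  have k2 : Y ^ 2 + Y = (x ^ 2 + x) * r + d ^ 2 * r ^ 2 + d * r := by grind
  rw [k1, k2] at k
  have hu : x ^ 2 + x = d ^ 2 + d + w := by grind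
  have hdw : y ^ 2 + x = d + w := by grind
  rw [← hw, hu, hdw] at k
  rw [hu]
  apply mul_right_cancel₀ hr
  clear hu hdw k1 k2 hY e e' hzz hz c hx2 hz2
  grind

end

/-- An explicit element `t` such that the fibre of the derivative through `x`, together with
`0` and `1`, lies in `⟨1, x, t⟩`. -/
noncomputable def conjPoint (m : ℕ) (x : K) : K :=
  (x ^ 2 + x) / (x + x ^ 2 ^ m) + x + x * partialTrace (m + 1) (1 / (x + x ^ 2 ^ m)) +
    partialTrace m (x + x ^ 2 / (x + (x ^ 2 ^ m) ^ 2))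

/-- The ratio `(t² + t)/(x² + x)` for `t = conjPoint m x`, in closed form: an explicit solution of
the Artin–Schreier equation of `ratio_equation`. -/
noncomputable def conjRatio (m : ℕ) (x : K) : K :=
  ((x ^ 2 ^ m) ^ 2 + x ^ 2 ^ m) / (x + x ^ 2 ^ m) ^ 2 + partialTrace (m + 1) (1 / (x + x ^ 2 ^ m))

variable (hF : ∀ a : K, a ^ 2 ^ (2 * m + 1) = a)
include hF

lemma conjRatio_eq {x : K} (h0 : x ≠ 0) (h1 : x ≠ 1) :
    conjRatio m x ^ 2 + conjRatio m x =
      (x ^ 2 + x) * ((x ^ 2 ^ m) ^ 2 + x ^ 2 ^ m) ^ 2 /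
        ((x + x ^ 2 ^ m) ^ 4 * (x + (x ^ 2 ^ m) ^ 2)) := by
  have hd := add_frob_ne_zero hF h0 h1
  have hG := partialTrace_sq_add (m + 1) (1 / (x + x ^ 2 ^ m))
  have hx2 := frob_frob hF x
  have hdd : ((x + x ^ 2 ^ m) ^ 2 ^ m) ^ 2 = x + (x ^ 2 ^ m) ^ 2 := by
    rw [add_pow_char_pow]; grind
  have hd' : x + (x ^ 2 ^ m) ^ 2 ≠ 0 := by rw [← hdd]; positivity
  rw [pow_succ 2 m, pow_mul, div_pow, div_pow, hdd, one_pow, one_pow] at hG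
  unfold conjRatio
  generalize partialTrace (m + 1) (1 / (x + x ^ 2 ^ m)) = G at *
  generalize x ^ 2 ^ m = y at *
  field_simp at hG ⊢
  grind

lemma conjPoint_sq_add {x : K} (h0 : x ≠ 0) (h1 : x ≠ 1) :
    conjPoint m x ^ 2 + conjPoint m x = (x ^ 2 + x) * conjRatio m x := by
  have hd := add_frob_ne_zero hF h0 h1
  have hG := partialTrace_sq_add (m + 1) (1 / (x + x ^ 2 ^ m))
  have hk := partialTrace_sq_add m (x + x ^ 2 / (x + (x ^ 2 ^ m) ^ 2))
  have hx2 := frob_frob hF x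
  have hdd : ((x + x ^ 2 ^ m) ^ 2 ^ m) ^ 2 = x + (x ^ 2 ^ m) ^ 2 := by
    rw [add_pow_char_pow]; grind
  have hd' : x + (x ^ 2 ^ m) ^ 2 ≠ 0 := by rw [← hdd]; positivity
  have c (a : K) : (a ^ 2) ^ 2 ^ m = (a ^ 2 ^ m) ^ 2 := by rw [← pow_mul, ← pow_mul, mul_comm]
  rw [pow_succ 2 m, pow_mul, div_pow, div_pow, hdd, one_pow, one_pow] at hG
  rw [add_pow_char_pow, div_pow, add_pow_char_pow, c, c, hx2] at hk
  unfold conjRatio conjPoint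
  generalize partialTrace (m + 1) (1 / (x + x ^ 2 ^ m)) = G at *
  generalize partialTrace m (x + x ^ 2 / (x + (x ^ 2 ^ m) ^ 2)) = k at *
  generalize x ^ 2 ^ m = y at *
  obtain ⟨g, hg⟩ : ∃ g, g = (x + y)⁻¹ := ⟨_, rfl⟩
  obtain ⟨g2, hg2⟩ : ∃ g, g = (x + y ^ 2)⁻¹ := ⟨_, rfl⟩
  have hg' : g * (x + y) = 1 := by rw [hg]; field_simp
  have hg2' : g2 * (x + y ^ 2) = 1 := by rw [hg2]; field_simp
  rw [add_comm y x] at hk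
  simp only [div_eq_mul_inv, one_mul, ← inv_pow, ← hg, ← hg2] at hG hk ⊢
  clear hg hg2 hdd hx2
  grind

/-- The point `t = conjPoint m x` lies on the fibre through `x` exactly when the left-hand side
vanishes. On the right it is a combination of `x^q` and `1`, which are independent over `𝔽₂`, with
coefficients in `𝔽₂` given by traces. -/
lemma conjPoint_defect {x : K} (h0 : x ≠ 0) (h1 : x ≠ 1) :
    conjPoint m x ^ 2 ^ m + conjPoint m x + (x + x ^ 2 ^ m) * conjRatio m x =
      x ^ 2 ^ m * (1 + partialTrace (2 * m + 1) (1 / (x + x ^ 2 ^ m))) +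
        (1 + partialTrace (2 * m + 1) (x * x ^ 2 ^ m / (x + x ^ 2 ^ m))) := by
  have hd := add_frob_ne_zero hF h0 h1
  have c (a : K) : (a ^ 2) ^ 2 ^ m = (a ^ 2 ^ m) ^ 2 := by rw [← pow_mul, ← pow_mul, mul_comm]
  obtain ⟨y, hy⟩ : ∃ y, y = x ^ 2 ^ m := ⟨_, rfl⟩
  -- `s` is the square root of `x`
  obtain ⟨s, hs⟩ : ∃ s, s = y ^ 2 ^ m := ⟨_, rfl⟩
  have hs2 : s ^ 2 = x := by rw [hs, hy]; exact frob_frob hF x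
  have hdq : (x + y) ^ 2 ^ m = y + s := by rw [add_pow_char_pow, ← hy, ← hs]
  have hd1 : x + y ≠ 0 := by rwa [hy]
  have hd2 : y + s ≠ 0 := by rw [← hdq]; positivity
  have hd3 : x + y ^ 2 = (y + s) ^ 2 := by grind
  obtain ⟨g, hg⟩ : ∃ g, g = 1 / (x + y) := ⟨_, rfl⟩
  obtain ⟨h, hh⟩ : ∃ h, h = 1 / (y + s) := ⟨_, rfl⟩
  have hg' : g * (x + y) = 1 := by rw [hg]; field_simp
  have hh' : h * (y + s) = 1 := by rw [hh]; field_simp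
  have hgq : g ^ 2 ^ m = h := by rw [hg, div_pow, hdq, one_pow, hh]
  have hhq : (h ^ 2) ^ 2 ^ m = g := by
    rw [← hgq, c]; exact frob_frob hF g
  obtain ⟨v, hv⟩ : ∃ v, v = x + x ^ 2 * h ^ 2 := ⟨_, rfl⟩
  have hvq : v ^ 2 ^ m = y + y ^ 2 * g := by
    rw [hv, add_pow_char_pow, mul_pow, hhq, c, ← hy]
  have hvqq : (v ^ 2 ^ m) ^ 2 ^ m = s + x * h := by
    rw [hvq, add_pow_char_pow, mul_pow, c, ← hs, hgq, hs2]
  -- the two partial traces occurring in `conjPoint`, and their images under `a ↦ a^q`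
  have hG : partialTrace (m + 1) g ^ 2 ^ m + partialTrace (m + 1) g =
      partialTrace (2 * m + 1) g + h := by
    have e1 := partialTrace_split m (m + 1) g
    have e2 := partialTrace_succ m g
    rw [partialTrace_pow]
    rw [hgq] at *
    rw [show m + (m + 1) = 2 * m + 1 by ring] at e1
    grind
  have hk : partialTrace m v ^ 2 ^ m + partialTrace m v =
      partialTrace (2 * m + 1) v + (s + x * h) := by
    have e1 := partialTrace_split m (m + 1) v
    have e2 := partialTrace_succ m (v ^ 2 ^ m)
    rw [partialTrace_pow]
    rw [hvqq] at e2
    rw [show m + (m + 1) = 2 * m + 1 by ring] at e1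
    grind
  have hT : partialTrace (2 * m + 1) v = partialTrace (2 * m + 1) (x * y * g) := by
    have e1 : v ^ 2 ^ m = x * y * g := by
      rw [hvq]; grind
    rw [← e1, trace_frob hF]
  have hxd : x ^ 2 / (x + y ^ 2) = x ^ 2 * h ^ 2 := by
    rw [hd3, hh]; field_simp
  unfold conjPoint conjRatio
  rw [← hy, hxd, ← hv, ← hg]
  simp only [add_pow_char_pow, mul_pow, div_pow, c, ← hy, hdq]
  rw [div_eq_mul_one_div _ (y + s), ← hh, div_eq_mul_one_div _ (x + y), ← hg,
    div_eq_mul_one_div _ ((x + y) ^ 2), ← one_div_pow, ← hg,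
    div_eq_mul_one_div (x * y) (x + y), ← hg, ← hT]
  clear hvq hvqq hhq hgq hxd hT hdq
  generalize partialTrace (2 * m + 1) v = Tv at *
  generalize partialTrace (2 * m + 1) g = Tg at *
  generalize partialTrace (m + 1) g ^ 2 ^ m = G' at *
  generalize partialTrace (m + 1) g = G at *
  generalize partialTrace m v ^ 2 ^ m = k' at *
  generalize partialTrace m v = k at *
  clear hd c hg hh hs hy hv
  have a1 : (y ^ 2 + x) * h = y + s := by
    rw [add_comm, hd3]; linear_combination (y + s) * hh'
  have a2 : (x ^ 2 + x + (y ^ 2 + y)) * g = x + y + 1 := by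
    have : x ^ 2 + x + (y ^ 2 + y) = (x + y) * (x + y + 1) := by grind
    rw [this]; linear_combination (x + y + 1) * hg'
  have a3 : (x + y) * ((y ^ 2 + y) * g ^ 2) = (y ^ 2 + y) * g := by
    linear_combination (y ^ 2 + y) * g * hg'
  have hG2 : G' = Tg + h + G := by grind
  have hk2 : k' = Tv + (s + x * h) + k := by grind
  rw [mul_add (x + y), a3, hG2, hk2]
  clear a3 hg' hh' hd3 hs2 hG hk hG2 hk2 hd1 hd2
  grind

end Algebra

/-! ### Fibres of the derivative -/

section Counting

variable {K : Type*} [Field K] [CharP K 2] {m : ℕ}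

/-- The condition `Tr(1/(x + x^q)) = Tr(x·x^q/(x + x^q)) = 1`, where `q = 2^m`. For `x ∉ 𝔽₂` it says
that `conjPoint m x` lies on the fibre of the derivative through `x`, see `fullFibre_iff`. -/
def FullFibre (m : ℕ) (x : K) : Prop :=
  partialTrace (2 * m + 1) (1 / (x + x ^ 2 ^ m)) = 1 ∧
    partialTrace (2 * m + 1) (x * x ^ 2 ^ m / (x + x ^ 2 ^ m)) = 1

section

variable (hF : ∀ a : K, a ^ 2 ^ (2 * m + 1) = a)
include hF

lemma fullFibre_iff {x : K} (h0 : x ≠ 0) (h1 : x ≠ 1) :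
    conjPoint m x ^ 2 ^ m + conjPoint m x = (x + x ^ 2 ^ m) * conjRatio m x ↔ FullFibre m x := by
  have hdef := conjPoint_defect hF h0 h1
  have hy0 : x ^ 2 ^ m ≠ 0 := by positivity
  have hy1 : x ^ 2 ^ m ≠ 1 := fun h => h1 (frob_inj hF (by simpa using h))
  unfold FullFibre
  rcases trace_cases hF (1 / (x + x ^ 2 ^ m)) with a | a <;>
  rcases trace_cases hF (x * x ^ 2 ^ m / (x + x ^ 2 ^ m)) with b | b <;>
  rw [a, b] at hdef ⊢ <;> clear a b <;>
  generalize x ^ 2 ^ m = y at * <;>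
  generalize conjPoint m x ^ 2 ^ m + conjPoint m x = P at * <;>
  generalize (x + y) * conjRatio m x = Q at * <;>
  grind

/-- The fibre through `x ∉ 𝔽₂`, apart from `x`, `x + 1` and elements of `𝔽₂`, is either empty or the
coset `t + ⟨1, x⟩` of `t = conjPoint m x`. -/
lemma mem_fibre_iff {x z : K} (h0 : x ≠ 0) (h1 : x ≠ 1) :
    (z ≠ 0 ∧ z ≠ 1 ∧ z ≠ x ∧ z ≠ x + 1 ∧
      (z ^ 2 ^ m + z) / (z ^ 2 + z) = (x ^ 2 ^ m + x) / (x ^ 2 + x)) ↔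
    FullFibre m x ∧ (z = conjPoint m x ∨ z = conjPoint m x + 1 ∨ z = conjPoint m x + x ∨
      z = conjPoint m x + x + 1) := by
  have hd := add_frob_ne_zero hF h0 h1
  have hu : x ^ 2 + x ≠ 0 := by grind
  have hw : (x ^ 2 ^ m) ^ 2 + x ^ 2 ^ m ≠ 0 := by
    have : (x ^ 2 ^ m) ^ 2 + x ^ 2 ^ m = (x ^ 2 + x) ^ 2 ^ m := by
      rw [add_pow_char_pow, ← pow_mul, ← pow_mul, mul_comm]
    rw [this]; positivity
  have hdw : x + (x ^ 2 ^ m) ^ 2 ≠ 0 := by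
    have := frob_frob hF x
    have hdd : ((x + x ^ 2 ^ m) ^ 2 ^ m) ^ 2 = x + (x ^ 2 ^ m) ^ 2 := by
      rw [add_pow_char_pow]; grind
    rw [← hdd]; positivity
  have hR := conjRatio_eq hF h0 h1
  have ht := conjPoint_sq_add hF h0 h1
  have hC := fullFibre_iff hF h0 h1
  have hR0 : conjRatio m x ^ 2 + conjRatio m x ≠ 0 := by
    rw [hR]; positivity
  have hone : (1 : K) ^ 2 ^ m = 1 := one_pow _
  constructor
  · rintro ⟨z0, z1, zx, zx1, hq⟩
    have hzu : z ^ 2 + z ≠ 0 := by grind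
    obtain ⟨r, hr⟩ : ∃ r, r = (z ^ 2 + z) / (x ^ 2 + x) := ⟨_, rfl⟩
    have hz : z ^ 2 + z = (x ^ 2 + x) * r := by rw [hr, mul_div_cancel₀ _ hu]
    have hzz : z ^ 2 ^ m + z = (x + x ^ 2 ^ m) * r := by
      rw [hr, mul_div_assoc', eq_div_iff hu]
      rw [div_eq_div_iff hzu hu] at hq
      linear_combination hq
    have hr0 : r ^ 2 + r ≠ 0 := by
      intro h
      rcases two_cases_of_sq (a := r) (by grind) with h | h
      · grind
      · rw [h, mul_one] at hz
        rcases two_cases_of_artinSchreier hz with h | h <;> contradiction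
    have e := ratio_equation hF h0 h1 rfl rfl hz hzz hr0
    have e2 : r ^ 2 + r = conjRatio m x ^ 2 + conjRatio m x := by
      rw [hR, eq_div_iff (by positivity)]
      have : x + x ^ 2 ^ m + ((x ^ 2 ^ m) ^ 2 + x ^ 2 ^ m) = x + (x ^ 2 ^ m) ^ 2 := by
        generalize x ^ 2 ^ m = y
        grind
      rw [this] at e
      linear_combination e
    have tri : r = conjRatio m x ∧ (z = conjPoint m x ∨ z = conjPoint m x + 1) ∨
        r = conjRatio m x + 1 ∧ (z = conjPoint m x + x ∨ z = conjPoint m x + x + 1) := by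
      rcases two_cases_of_artinSchreier e2 with h | h
      · left
        refine ⟨h, two_cases_of_artinSchreier ?_⟩
        rw [hz, ht, h]
      · right
        refine ⟨h, two_cases_of_artinSchreier ?_⟩
        grind
    rw [← hC]
    rcases tri with ⟨h, h' | h'⟩ | ⟨h, h' | h'⟩ <;> subst h' <;>
      simp only [add_pow_char_pow, hone, h] at hzz <;> clear hR ht hR0 e e2 hq hz hr <;> grind
  · rintro ⟨hc, hz⟩
    rw [← hC] at hc
    have key : ∃ r, r ^ 2 + r ≠ 0 ∧ z ^ 2 + z = (x ^ 2 + x) * r ∧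
        z ^ 2 ^ m + z = (x + x ^ 2 ^ m) * r := by
      rcases hz with h | h | h | h
      · exact ⟨conjRatio m x, hR0, by grind, by grind⟩
      · refine ⟨conjRatio m x, hR0, by grind, ?_⟩
        rw [h, add_pow_char_pow, hone]; grind
      · refine ⟨conjRatio m x + 1, by grind, by grind, ?_⟩
        rw [h, add_pow_char_pow]; grind
      · refine ⟨conjRatio m x + 1, by grind, by grind, ?_⟩
        rw [h, add_pow_char_pow, add_pow_char_pow, hone]; grind
    obtain ⟨r, hr0, hz1, hz2⟩ := key
    have hrz : r ≠ 0 := by grind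
    have hzu : z ^ 2 + z ≠ 0 := by rw [hz1]; positivity
    refine ⟨by grind, by grind, ?_, ?_, ?_⟩
    · rintro rfl
      apply hr0
      have : (z ^ 2 + z) * (r + 1) = 0 := by grind
      grind
    · rintro rfl
      apply hr0
      have : (x ^ 2 + x) * (r + 1) = 0 := by grind
      grind
    · rw [hz2, hz1]; field_simp; ring

end

variable [Fintype K]

lemma fibre_card (hF : ∀ a : K, a ^ 2 ^ (2 * m + 1) = a) {x : K} (h0 : x ≠ 0) (h1 : x ≠ 1) :
    (Finset.univ.filter fun z : K => z ≠ 0 ∧ z ≠ 1 ∧ z ≠ x ∧ z ≠ x + 1 ∧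
      (z ^ 2 ^ m + z) / (z ^ 2 + z) = (x ^ 2 ^ m + x) / (x ^ 2 + x)).card =
      if FullFibre m x then 4 else 0 := by
  simp only [mem_fibre_iff hF h0 h1]
  split_ifs with hc
  · have : (Finset.univ.filter fun z : K => FullFibre m x ∧ (z = conjPoint m x ∨
        z = conjPoint m x + 1 ∨ z = conjPoint m x + x ∨ z = conjPoint m x + x + 1)) =
        {conjPoint m x, conjPoint m x + 1, conjPoint m x + x, conjPoint m x + x + 1} := by
      ext z; simp [hc]
    rw [this, Finset.card_eq_of_equiv_fin]
    have h10 : (1 : K) ≠ 0 := one_ne_zero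
    have a1 : conjPoint m x ≠ conjPoint m x + 1 := by grind
    have a2 : conjPoint m x ≠ conjPoint m x + x := by grind
    have a3 : conjPoint m x ≠ conjPoint m x + x + 1 := by grind
    have a4 : conjPoint m x + 1 ≠ conjPoint m x + x := by grind
    have a5 : conjPoint m x + 1 ≠ conjPoint m x + x + 1 := by grind
    have a6 : conjPoint m x + x ≠ conjPoint m x + x + 1 := by grind
    exact Finset.equivFinOfCardEq (by
      rw [Finset.card_insert_of_notMem, Finset.card_insert_of_notMem,
        Finset.card_insert_of_notMem, Finset.card_singleton] <;>
        simp only [Finset.mem_insert, Finset.mem_singleton, not_or] <;> tauto)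
  · simp [hc]

/-- The derivative of the power map `X ↦ X^(2^m - 1)` in direction `1`. -/
def powDeriv (m : ℕ) (x : K) : K := x ^ (2 ^ m - 1) + (x + 1) ^ (2 ^ m - 1)

omit [Fintype K] in
lemma powDeriv_base (hm : 0 < m) : powDeriv m (0 : K) = 1 ∧ powDeriv m (1 : K) = 1 := by
  have : 2 ^ m - 1 ≠ 0 := by
    have := Nat.one_lt_two_pow hm.ne'
    omega
  constructor
  · simp [powDeriv, this]
  · simp [powDeriv, this, CharTwo.add_self_eq_zero]

omit [Fintype K] in
lemma powDeriv_eq {x : K} (h0 : x ≠ 0) (h1 : x ≠ 1) :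
    powDeriv m x = (x ^ 2 ^ m + x) / (x ^ 2 + x) := by
  have e (a : K) : a ^ (2 ^ m - 1) * a = a ^ 2 ^ m := by
    rw [← pow_succ, Nat.sub_add_cancel Nat.one_le_two_pow]
  have hu : x ^ 2 + x ≠ 0 := by grind
  have e1 := e x
  have e2 := e (x + 1)
  rw [add_pow_char_pow, one_pow] at e2
  rw [eq_div_iff hu, powDeriv]
  generalize x ^ (2 ^ m - 1) = a at *
  generalize (x + 1) ^ (2 ^ m - 1) = b at *
  generalize x ^ 2 ^ m = y at *
  grind

omit [Fintype K] in
lemma powDeriv_eq_one_iff {x : K} (h0 : x ≠ 0) (h1 : x ≠ 1) :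
    powDeriv m x = 1 ↔ x ^ 2 ^ m = x ^ 2 := by
  have hu : x ^ 2 + x ≠ 0 := by grind
  rw [powDeriv_eq h0 h1, div_eq_one_iff_eq hu]
  exact add_left_inj x

/-- The number of ordered pairs `(x, z)` with equal derivative and `z ∉ {x, x + 1}`. The fibre over
`1` contains `𝔽₂`; the first term counts the pairs with exactly one entry in `𝔽₂`. -/
lemma pairs_card (hm : 0 < m) (hF : ∀ a : K, a ^ 2 ^ (2 * m + 1) = a) :
    (Finset.univ.filter fun p : K × K =>
      p.2 ≠ p.1 ∧ p.2 ≠ p.1 + 1 ∧ powDeriv m p.1 = powDeriv m p.2).card =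
      4 * (Finset.univ.filter fun x : K => x ≠ 0 ∧ x ≠ 1 ∧ x ^ 2 ^ m = x ^ 2).card +
      4 * (Finset.univ.filter fun x : K => x ≠ 0 ∧ x ≠ 1 ∧ FullFibre m x).card := by
  obtain ⟨hD0, hD1⟩ := powDeriv_base (K := K) hm
  have step : (Finset.univ.filter fun p : K × K =>
      p.2 ≠ p.1 ∧ p.2 ≠ p.1 + 1 ∧ powDeriv m p.1 = powDeriv m p.2).card =
      ∑ x : K, (Finset.univ.filter fun z : K =>
        z ≠ x ∧ z ≠ x + 1 ∧ powDeriv m x = powDeriv m z).card := by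
    simp only [Finset.card_filter, Fintype.sum_prod_type]
  have h11 : (1 : K) + 1 = 0 := CharTwo.add_self_eq_zero 1
  have f0 : (Finset.univ.filter fun z : K =>
      z ≠ 0 ∧ z ≠ 0 + 1 ∧ powDeriv m 0 = powDeriv m z) =
      Finset.univ.filter fun x : K => x ≠ 0 ∧ x ≠ 1 ∧ x ^ 2 ^ m = x ^ 2 := by
    ext z
    simp only [Finset.mem_filter, Finset.mem_univ, true_and, zero_add, hD0]
    constructor
    · rintro ⟨a, b, c⟩; exact ⟨a, b, (powDeriv_eq_one_iff a b).1 c.symm⟩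
    · rintro ⟨a, b, c⟩; exact ⟨a, b, ((powDeriv_eq_one_iff a b).2 c).symm⟩
  have f1 : (Finset.univ.filter fun z : K =>
      z ≠ 1 ∧ z ≠ 1 + 1 ∧ powDeriv m 1 = powDeriv m z) =
      Finset.univ.filter fun x : K => x ≠ 0 ∧ x ≠ 1 ∧ x ^ 2 ^ m = x ^ 2 := by
    ext z
    simp only [Finset.mem_filter, Finset.mem_univ, true_and, h11, hD1]
    constructor
    · rintro ⟨b, a, c⟩; exact ⟨a, b, (powDeriv_eq_one_iff a b).1 c.symm⟩
    · rintro ⟨a, b, c⟩; exact ⟨b, a, ((powDeriv_eq_one_iff a b).2 c).symm⟩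
  have fx {x : K} (h0 : x ≠ 0) (h1 : x ≠ 1) : (Finset.univ.filter fun z : K =>
      z ≠ x ∧ z ≠ x + 1 ∧ powDeriv m x = powDeriv m z).card =
      2 * (if x ^ 2 ^ m = x ^ 2 then 1 else 0) + 4 * (if FullFibre m x then 1 else 0) := by
    rw [← Finset.card_filter_add_card_filter_not (fun z : K => z = 0 ∨ z = 1)]
    congr 1
    · by_cases h : x ^ 2 ^ m = x ^ 2
      · have hx := (powDeriv_eq_one_iff h0 h1).2 h
        have : (Finset.filter (fun z : K => z = 0 ∨ z = 1) (Finset.univ.filter fun z : K =>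
            z ≠ x ∧ z ≠ x + 1 ∧ powDeriv m x = powDeriv m z)) = {0, 1} := by
          ext z
          simp only [Finset.mem_filter, Finset.mem_univ, true_and, Finset.mem_insert,
            Finset.mem_singleton]
          constructor
          · exact fun h => h.2
          · rintro (rfl | rfl)
            · exact ⟨⟨h0.symm, by grind, by rw [hx, hD0]⟩, Or.inl rfl⟩
            · exact ⟨⟨h1.symm, by grind, by rw [hx, hD1]⟩, Or.inr rfl⟩
        rw [this, if_pos h, Finset.card_pair zero_ne_one]
      · have hx := mt (powDeriv_eq_one_iff h0 h1).1 h
        rw [if_neg h, mul_zero, Finset.card_eq_zero, Finset.filter_eq_empty_iff]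
        intro z hz
        simp only [Finset.mem_filter, Finset.mem_univ, true_and] at hz
        rintro (rfl | rfl)
        · exact hx (hz.2.2.trans hD0)
        · exact hx (hz.2.2.trans hD1)
    · have e := fibre_card hF h0 h1
      have : (4 * if FullFibre m x then 1 else 0) = if FullFibre m x then 4 else 0 := by
        split_ifs <;> rfl
      rw [this, ← e]
      congr 1
      ext z
      simp only [Finset.mem_filter, Finset.mem_univ, true_and, not_or]
      constructor
      · rintro ⟨⟨a, b, c⟩, d, e⟩
        rw [powDeriv_eq h0 h1, powDeriv_eq d e] at c
        exact ⟨d, e, a, b, c.symm⟩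
      · rintro ⟨d, e, a, b, c⟩
        refine ⟨⟨a, b, ?_⟩, d, e⟩
        rw [powDeriv_eq h0 h1, powDeriv_eq d e, c]
  have split (f : K → ℕ) : ∑ x, f x = f 0 + f 1 +
      ∑ x ∈ Finset.univ.filter (fun x : K => x ≠ 0 ∧ x ≠ 1), f x := by
    rw [← Finset.sum_filter_add_sum_filter_not Finset.univ (fun x : K => x ≠ 0 ∧ x ≠ 1), add_comm]
    congr 1
    have : (Finset.univ.filter fun x : K => ¬(x ≠ 0 ∧ x ≠ 1)) = {0, 1} := by
      ext x; simp; tauto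
    rw [this, Finset.sum_pair zero_ne_one]
  rw [step, split, f0, f1, Finset.sum_congr rfl (fun x hx => fx (Finset.mem_filter.1 hx).2.1
    (Finset.mem_filter.1 hx).2.2), Finset.sum_add_distrib, ← Finset.mul_sum, ← Finset.mul_sum,
    ← Finset.card_filter, ← Finset.card_filter, Finset.filter_filter, Finset.filter_filter]
  simp only [and_assoc]
  ring

/-- `x^(2^m) = x²` forces `x ∈ 𝔽₈`, and `𝔽₈ ⊆ K` exactly when `3 ∣ 2m + 1`. -/
lemma base_fibre_card (hcard : Fintype.card K = 2 ^ (2 * m + 1))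
    (hF : ∀ a : K, a ^ 2 ^ (2 * m + 1) = a) :
    (Finset.univ.filter fun x : K => x ≠ 0 ∧ x ≠ 1 ∧ x ^ 2 ^ m = x ^ 2).card =
      if m % 3 = 1 then 6 else 0 := by
  have h8 {x : K} (h : x ^ 2 ^ m = x ^ 2) : x ^ 8 = x := by
    have := frob_frob hF x
    rw [h, ← pow_mul x, mul_comm 2, pow_mul, h] at this
    rw [← pow_mul, ← pow_mul] at this
    exact this
  have h8k {x : K} (h : x ^ 8 = x) (k : ℕ) : x ^ 2 ^ (3 * k) = x := by
    induction k with
    | zero => simp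
    | succ k ih => rw [mul_add, pow_add, pow_mul, ih]; exact h
  split_ifs with hm
  · obtain ⟨k, rfl⟩ : ∃ k, m = 3 * k + 1 := ⟨m / 3, by omega⟩
    have hdvd : 7 ∣ Fintype.card Kˣ := by
      rw [Fintype.card_units, hcard, show 2 * (3 * k + 1) + 1 = 3 * (2 * k + 1) by ring, pow_mul]
      exact Nat.sub_one_dvd_pow_sub_one 8 (2 * k + 1)
    have h6 := IsCyclic.card_orderOf_eq_totient hdvd
    rw [Nat.totient_prime (by norm_num)] at h6
    rw [← show 7 - 1 = 6 from rfl, ← h6]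
    symm
    have hp : Fact (Nat.Prime 7) := ⟨by norm_num⟩
    refine Finset.card_bij (fun a _ => (a : K)) ?_ (fun a _ b _ h => Units.ext h) ?_
    · intro a ha
      simp only [Finset.mem_filter, Finset.mem_univ, true_and] at ha ⊢
      have ha7 : (a : K) ^ 7 = 1 := by
        have := pow_orderOf_eq_one a
        rw [ha] at this
        rw [← Units.val_pow_eq_pow_val, this, Units.val_one]
      refine ⟨a.ne_zero, ?_, ?_⟩
      · intro h
        have : a = 1 := Units.ext h
        rw [this, orderOf_one] at ha
        omega
      · rw [pow_succ, pow_mul, h8k (by linear_combination (a : K) * ha7)]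
    · intro x hx
      simp only [Finset.mem_filter, Finset.mem_univ, true_and] at hx
      obtain ⟨x0, x1, hx⟩ := hx
      refine ⟨Units.mk0 x x0, ?_, rfl⟩
      simp only [Finset.mem_filter, Finset.mem_univ, true_and]
      apply orderOf_eq_prime
      · apply Units.ext
        have := h8 hx
        apply mul_right_cancel₀ x0
        simp only [Units.val_pow_eq_pow_val, Units.val_mk0, Units.val_one]
        linear_combination this
      · intro h
        exact x1 (congrArg Units.val h)
  · rw [Finset.card_eq_zero, Finset.filter_eq_empty_iff]
    rintro x - ⟨x0, x1, hx⟩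
    have e8 := h8 hx
    have : x ^ 2 = x := by
      have e := hF x
      have h3 : (2 * m + 1) % 3 = 1 ∨ (2 * m + 1) % 3 = 2 := by omega
      generalize 2 * m + 1 = n at *
      rcases h3 with h3 | h3
      · rw [show n = 3 * (n / 3) + 1 by omega, pow_add, pow_mul, h8k e8] at e
        simpa using e
      · rw [show n = 3 * (n / 3) + 2 by omega, pow_add, pow_mul, h8k e8] at e
        have e4 : x ^ 4 = x := by simpa using e
        calc x ^ 2 = (x ^ 4) ^ 2 := by rw [e4]
          _ = x ^ 8 := by ring
          _ = x := e8
    rcases two_cases_of_sq this with h | h <;> contradiction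

end Counting

/-! ### Character sums -/

section CharacterSums

variable {K : Type*} [Field K] [CharP K 2] {m : ℕ}

/-- The canonical additive character `a ↦ (-1)^Tr(a)` of a field with `2^(2m+1)` elements. -/
noncomputable def traceChar (m : ℕ) (a : K) : ℤ :=
  if partialTrace (2 * m + 1) a = 0 then 1 else -1

variable (hF : ∀ a : K, a ^ 2 ^ (2 * m + 1) = a)

lemma traceChar_zero : traceChar m (0 : K) = 1 := by
  simp [traceChar, partialTrace]

include hF

lemma traceChar_add (a b : K) : traceChar m (a + b) = traceChar m a * traceChar m b := by
  have h11 : (1 : K) + 1 = 0 := CharTwo.add_self_eq_zero 1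
  unfold traceChar
  rw [partialTrace_add]
  rcases trace_cases hF a with h | h <;> rcases trace_cases hF b with h' | h' <;>
    simp [h, h', h11]

lemma traceChar_add_one (a : K) : traceChar m (a + 1) = -traceChar m a := by
  have : traceChar m (1 : K) = -1 := by simp [traceChar, trace_one hF]
  rw [traceChar_add hF, this]; ring

variable [Fintype K]

lemma sum_traceChar : ∑ a : K, traceChar m a = 0 := by
  have h : ∑ a : K, traceChar m (a + 1) = ∑ a : K, traceChar m a :=
    Equiv.sum_comp (Equiv.addRight (1 : K)) _
  simp only [traceChar_add_one hF, Finset.sum_neg_distrib] at h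
  omega

/-- The map `x ↦ x + x^q` has kernel `𝔽₂` and its image is the set of elements of trace zero. -/
lemma card_add_frob_eq (d : K) :
    ((Finset.univ.filter fun x : K => x + x ^ 2 ^ m = d).card : ℤ) = 1 + traceChar m d := by
  unfold traceChar
  split_ifs with h
  · obtain ⟨t, ht⟩ : ∃ t, t = partialTrace m (d ^ 2) := ⟨_, rfl⟩
    have htd : t + t ^ 2 ^ m = d := by
      rw [ht, partialTrace_pow]
      have e1 := partialTrace_split 1 (m + m) d
      have e2 := partialTrace_split m m (d ^ 2)
      have e3 : partialTrace 1 d = d := by simp [partialTrace]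
      rw [show 1 + (m + m) = 2 * m + 1 by ring, h, e3] at e1
      simp only [pow_one] at e1
      grind
    have : (Finset.univ.filter fun x : K => x + x ^ 2 ^ m = d) = {t, t + 1} := by
      ext x
      simp only [Finset.mem_filter, Finset.mem_univ, true_and, Finset.mem_insert,
        Finset.mem_singleton]
      constructor
      · intro hx
        have := frob_fixed hF (a := x + t) (by rw [add_pow_char_pow]; grind)
        grind
      · rintro (rfl | rfl)
        · exact htd
        · rw [add_pow_char_pow, one_pow]; grind
    rw [this, Finset.card_pair (by simp)]
    rfl
  · rw [Finset.filter_eq_empty_iff.2]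
    · rfl
    · rintro x - rfl
      apply h
      rw [partialTrace_add, trace_frob hF, CharTwo.add_self_eq_zero]

/-- Grouping by `d = x + x^q` turns the left-hand side into `∑ (1 + χ(d)) χ(1/d)`, and `∑ χ(1/d) = 0`.
The convention `1/0 = 0` is used on both sides. -/
lemma sum_inv_add_frob :
    ∑ x : K, traceChar m (1 / (x + x ^ 2 ^ m)) = ∑ x : K, traceChar m (x⁻¹ + x) := by
  have h1 : ∑ d : K, traceChar m (d⁻¹) = 0 := by
    rw [← sum_traceChar hF]
    exact Equiv.sum_comp (Function.Involutive.toPerm _ (inv_involutive (G := K))) (traceChar m)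
  rw [← Finset.sum_fiberwise Finset.univ (fun x : K => x + x ^ 2 ^ m)]
  have h2 (d : K) : ∑ x ∈ Finset.univ.filter (fun x : K => x + x ^ 2 ^ m = d),
      traceChar m (1 / (x + x ^ 2 ^ m)) = traceChar m d⁻¹ + traceChar m (d⁻¹ + d) := by
    rw [Finset.sum_congr rfl (g := fun _ => traceChar m d⁻¹), Finset.sum_const, nsmul_eq_mul,
      card_add_frob_eq hF, traceChar_add hF]
    · ring
    · intro x hx
      rw [(Finset.mem_filter.1 hx).2, one_div]
  simp only [h2, Finset.sum_add_distrib, h1, zero_add]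

/-- The substitution `x ↦ 1/x` reduces this sum to the preceding one. -/
lemma sum_mul_div_add_frob :
    ∑ x : K, traceChar m (x * x ^ 2 ^ m / (x + x ^ 2 ^ m)) =
      ∑ x : K, traceChar m (x⁻¹ + x) := by
  rw [← sum_inv_add_frob hF,
    ← Equiv.sum_comp (Function.Involutive.toPerm _ (inv_involutive (G := K)))]
  refine Finset.sum_congr rfl fun x _ => ?_
  simp only [Function.Involutive.coe_toPerm, inv_pow]
  congr 1
  by_cases h0 : x = 0
  · simp [h0]
  · have hy : x ^ 2 ^ m ≠ 0 := by positivity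
    generalize x ^ 2 ^ m = y at *
    rw [inv_add_inv h0 hy, div_div_eq_mul_div, one_div]
    field_simp

/-- The count of full fibres by character sums. The constant `4` comes from removing the terms
`x = 0, 1`, where the characters take the value `1` as `1/0 = 0`. -/
lemma card_fullFibre (hcard : Fintype.card K = 2 ^ (2 * m + 1)) :
    4 * ((Finset.univ.filter fun x : K => x ≠ 0 ∧ x ≠ 1 ∧ FullFibre m x).card : ℤ) =
      2 ^ (2 * m + 1) + 4 - 3 * ∑ x : K, traceChar m (x⁻¹ + x) := by
  have h11 : (1 : K) + 1 = 0 := CharTwo.add_self_eq_zero 1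
  have split (f : K → ℤ) : ∑ x ∈ Finset.univ.filter (fun x : K => x ≠ 0 ∧ x ≠ 1), f x =
      ∑ x, f x - f 0 - f 1 := by
    rw [← Finset.sum_filter_add_sum_filter_not Finset.univ (fun x : K => x ≠ 0 ∧ x ≠ 1)]
    have : (Finset.univ.filter fun x : K => ¬(x ≠ 0 ∧ x ≠ 1)) = {0, 1} := by
      ext x; simp; tauto
    rw [this, Finset.sum_pair zero_ne_one]
    ring
  -- detection of the two trace conditions by `(1 - χ)/2`
  have h1 : 4 * ((Finset.univ.filter fun x : K => x ≠ 0 ∧ x ≠ 1 ∧ FullFibre m x).card : ℤ) =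
      ∑ x ∈ Finset.univ.filter (fun x : K => x ≠ 0 ∧ x ≠ 1),
        (1 - traceChar m (1 / (x + x ^ 2 ^ m))) *
          (1 - traceChar m (x * x ^ 2 ^ m / (x + x ^ 2 ^ m))) := by
    have : (Finset.univ.filter fun x : K => x ≠ 0 ∧ x ≠ 1 ∧ FullFibre m x) =
        (Finset.univ.filter fun x : K => x ≠ 0 ∧ x ≠ 1).filter fun x => FullFibre m x := by
      rw [Finset.filter_filter]; simp only [and_assoc]
    rw [this, Finset.card_filter]
    push_cast
    rw [Finset.mul_sum]
    refine Finset.sum_congr rfl fun x _ => ?_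
    unfold traceChar FullFibre
    rcases trace_cases hF (1 / (x + x ^ 2 ^ m)) with a | a <;>
    rcases trace_cases hF (x * x ^ 2 ^ m / (x + x ^ 2 ^ m)) with b | b <;>
    simp only [a, b] <;> norm_num
  have h2 (x : K) : (1 - traceChar m (1 / (x + x ^ 2 ^ m))) *
      (1 - traceChar m (x * x ^ 2 ^ m / (x + x ^ 2 ^ m))) =
      1 - traceChar m (1 / (x + x ^ 2 ^ m)) - traceChar m (x * x ^ 2 ^ m / (x + x ^ 2 ^ m)) +
        traceChar m ((x * x ^ 2 ^ m + 1) / (x + x ^ 2 ^ m)) := by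
    rw [add_div, traceChar_add hF]; ring
  -- the mixed sum, by the translation `x ↦ x + 1`
  have h3 : ∑ x ∈ Finset.univ.filter (fun x : K => x ≠ 0 ∧ x ≠ 1),
        traceChar m ((x * x ^ 2 ^ m + 1) / (x + x ^ 2 ^ m)) =
      -∑ x ∈ Finset.univ.filter (fun x : K => x ≠ 0 ∧ x ≠ 1),
        traceChar m (x * x ^ 2 ^ m / (x + x ^ 2 ^ m)) := by
    rw [← Finset.sum_neg_distrib]
    refine Finset.sum_nbij' (fun x => x + 1) (fun x => x + 1) ?_ ?_ ?_ ?_ ?_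
    · intro x hx; simp only [Finset.mem_filter, Finset.mem_univ, true_and] at hx ⊢; grind
    · intro x hx; simp only [Finset.mem_filter, Finset.mem_univ, true_and] at hx ⊢; grind
    · intro x _; grind
    · intro x _; grind
    · intro x hx
      simp only [Finset.mem_filter, Finset.mem_univ, true_and] at hx
      have hd := add_frob_ne_zero hF hx.1 hx.2
      rw [← traceChar_add_one hF, add_pow_char_pow, one_pow]
      congr 1
      generalize x ^ 2 ^ m = y at *
      have : x + 1 + (y + 1) = x + y := by grind
      rw [this, div_add_one hd]
      congr 1
      grind
  have hq : (0 : K) ^ 2 ^ m = 0 := by simp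
  have hc : ∑ x : K, (1 : ℤ) = 2 ^ (2 * m + 1) := by
    simp [hcard]
  rw [h1]
  simp only [h2, Finset.sum_add_distrib, Finset.sum_sub_distrib]
  rw [h3, split, split, split, sum_inv_add_frob hF, sum_mul_div_add_frob hF, hc]
  simp only [hq, one_pow, h11, add_zero, div_zero, traceChar_zero]
  ring

end CharacterSums

/-! ### From flats to pairs -/

section Flats

variable {K : Type*} [Field K] [CharP K 2] [Fintype K] {m : ℕ}

/-- Each vanishing flat has `4 · 3 · 2` orderings of three of its points, and a triple of distinct
points determines the fourth one. -/
lemma flats_card_mul (F : K → K) :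
    Nat.card (vanishingFlats F) * 24 =
      (Finset.univ.filter fun p : (_ : K) × (_ : K) × K => p.2.1 ≠ p.1 ∧ p.2.2 ≠ p.1 ∧
        p.2.2 ≠ p.2.1 ∧ F p.1 + F p.2.1 + F p.2.2 + F (p.1 + p.2.1 + p.2.2) = 0).card := by
  obtain ⟨V, hV⟩ : ∃ V : Finset (Finset K), ∀ s, s ∈ V ↔ s ∈ vanishingFlats F :=
    ⟨(vanishingFlats F).toFinset, fun s => Set.mem_toFinset⟩
  have hVc : Nat.card (vanishingFlats F) = V.card := by
    have : vanishingFlats F = (V : Set (Finset K)) := by ext s; simp [hV]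
    rw [this, Nat.card_coe_set_eq, Set.ncard_coe_finset]
  -- the fourth point is distinct from the other three
  have h4 {x y z : K} (hyx : y ≠ x) (hzx : z ≠ x) (hzy : z ≠ y) :
      x ∉ ({y, z, x + y + z} : Finset K) ∧ y ∉ ({z, x + y + z} : Finset K) ∧
        z ∉ ({x + y + z} : Finset K) := by
    simp only [Finset.mem_insert, Finset.mem_singleton, not_or]
    refine ⟨⟨hyx.symm, hzx.symm, ?_⟩, ⟨hzy.symm, ?_⟩, ?_⟩ <;> grind
  rw [hVc, Finset.card_eq_sum_card_fiberwise (t := V)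
    (f := fun p : (_ : K) × (_ : K) × K => ({p.1, p.2.1, p.2.2, p.1 + p.2.1 + p.2.2} : Finset K)),
    Finset.sum_const_nat (m := 24)]
  · intro s hs
    have hs' := (hV s).1 hs
    obtain ⟨hs4, hs0, hsF⟩ := hs'
    have : (Finset.filter (fun p : (_ : K) × (_ : K) × K =>
        ({p.1, p.2.1, p.2.2, p.1 + p.2.1 + p.2.2} : Finset K) = s)
        (Finset.univ.filter fun p : (_ : K) × (_ : K) × K => p.2.1 ≠ p.1 ∧ p.2.2 ≠ p.1 ∧
        p.2.2 ≠ p.2.1 ∧ F p.1 + F p.2.1 + F p.2.2 + F (p.1 + p.2.1 + p.2.2) = 0)) =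
        s.sigma fun x => (s.erase x).sigma fun y => (s.erase x).erase y := by
      ext ⟨x, y, z⟩
      simp only [Finset.mem_filter, Finset.mem_univ, true_and, Finset.mem_sigma, Finset.mem_erase]
      constructor
      · rintro ⟨⟨hyx, hzx, hzy, -⟩, rfl⟩
        refine ⟨by simp, ⟨hyx, by simp⟩, hzy, hzx, by simp⟩
      · rintro ⟨hx, ⟨hyx, hy⟩, hzy, hzx, hz⟩
        obtain ⟨m1, m2, m3⟩ := h4 hyx hzx hzy
        -- the remaining point of `s`
        have hc3 : (({x, y, z} : Finset K)).card = 3 := by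
          rw [Finset.card_insert_of_notMem, Finset.card_pair hzy.symm]
          simp [hyx.symm, hzx.symm]
        have hsub : ({x, y, z} : Finset K) ⊆ s := by
          intro a ha
          simp only [Finset.mem_insert, Finset.mem_singleton] at ha
          rcases ha with rfl | rfl | rfl <;> assumption
        obtain ⟨w, hw⟩ : ∃ w, s \ {x, y, z} = {w} := by
          rw [← Finset.card_eq_one, Finset.card_sdiff_of_subset hsub, hs4, hc3]
        have hsum := Finset.sum_sdiff (f := fun a => a) hsub
        have hx3 : x ∉ ({y, z} : Finset K) := by simp [hyx.symm, hzx.symm]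
        rw [hw, Finset.sum_singleton, Finset.sum_insert hx3, Finset.sum_pair hzy.symm, hs0] at hsum
        have hwe : w = x + y + z := by grind
        have hseq : ({x, y, z, x + y + z} : Finset K) = s := by
          rw [← Finset.sdiff_union_of_subset hsub, hw, hwe]
          ext a; simp; tauto
        refine ⟨⟨hyx, hzx, hzy, ?_⟩, hseq⟩
        rw [← hseq, Finset.sum_insert m1, Finset.sum_insert m2, Finset.sum_insert m3,
          Finset.sum_singleton] at hsF
        rw [← hsF]; ring
    rw [this, Finset.card_sigma, Finset.sum_const_nat (m := 6), hs4]
    intro x hx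
    have c3 : (s.erase x).card = 3 := by rw [Finset.card_erase_of_mem hx, hs4]
    rw [Finset.card_sigma, Finset.sum_const_nat (m := 2), c3]
    intro y hy
    rw [Finset.card_erase_of_mem hy, c3]
  · rintro ⟨x, y, z⟩ hp
    simp only [Finset.coe_filter, Finset.mem_univ, true_and, Set.mem_ofPred_eq] at hp
    obtain ⟨hyx, hzx, hzy, hs⟩ := hp
    obtain ⟨m1, m2, m3⟩ := h4 hyx hzx hzy
    rw [Finset.mem_coe, hV]
    refine ⟨?_, ?_, ?_⟩
    · rw [Finset.card_insert_of_notMem m1, Finset.card_insert_of_notMem m2,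
        Finset.card_insert_of_notMem m3, Finset.card_singleton]
    · rw [Finset.sum_insert m1, Finset.sum_insert m2, Finset.sum_insert m3, Finset.sum_singleton]
      grind
    · rw [Finset.sum_insert m1, Finset.sum_insert m2, Finset.sum_insert m3, Finset.sum_singleton]
      rw [← hs]; ring

/-- Homogeneity of the power map: the direction `x + y` of a triple can be scaled to `1`. -/
lemma triples_card (F : K → K) (hFX : ∀ X, F X = X ^ (2 ^ m - 1)) :
    (Finset.univ.filter fun p : (_ : K) × (_ : K) × K => p.2.1 ≠ p.1 ∧ p.2.2 ≠ p.1 ∧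
        p.2.2 ≠ p.2.1 ∧ F p.1 + F p.2.1 + F p.2.2 + F (p.1 + p.2.1 + p.2.2) = 0).card =
      (Fintype.card K - 1) * (Finset.univ.filter fun p : K × K =>
        p.2 ≠ p.1 ∧ p.2 ≠ p.1 + 1 ∧ powDeriv m p.1 = powDeriv m p.2).card := by
  have hc : Fintype.card K - 1 = (Finset.univ.erase (0 : K)).card := by
    rw [Finset.card_erase_of_mem (Finset.mem_univ _), Finset.card_univ]
  have key (a x z : K) : F (a * x) + F (a * x + a) + F (a * z) + F (a * x + (a * x + a) + a * z) =
      a ^ (2 ^ m - 1) * (powDeriv m x + powDeriv m z) := by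
    have e1 : a * x + a = a * (x + 1) := by ring
    have e2 : a * x + (a * x + a) + a * z = a * (z + 1) := by grind
    rw [e2, e1]
    simp only [hFX, powDeriv, mul_pow]; ring
  rw [hc, ← Finset.card_product]
  refine Finset.card_nbij' (fun p => (p.1 + p.2.1, p.1 / (p.1 + p.2.1), p.2.2 / (p.1 + p.2.1)))
    (fun t => ⟨t.1 * t.2.1, t.1 * t.2.1 + t.1, t.1 * t.2.2⟩) ?_ ?_ ?_ ?_
  · rintro ⟨x, y, z⟩ hp
    simp only [Finset.coe_filter, Finset.mem_univ, true_and, Set.mem_ofPred_eq] at hp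
    obtain ⟨hyx, hzx, hzy, hs⟩ := hp
    have ha : x + y ≠ 0 := by grind
    have hk := key (x + y) (x / (x + y)) (z / (x + y))
    have ex : (x + y) * (x / (x + y)) = x := mul_div_cancel₀ _ ha
    have ez : (x + y) * (z / (x + y)) = z := mul_div_cancel₀ _ ha
    have ey : x + (x + y) = y := by grind
    rw [ex, ez, ey, hs] at hk
    have hk' := (mul_eq_zero.1 hk.symm).resolve_left (pow_ne_zero _ ha)
    simp only [Finset.coe_product, Set.mem_prod, Finset.mem_coe, Finset.mem_erase,
      Finset.mem_univ, Finset.mem_filter, true_and, and_true]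
    refine ⟨ha, ?_, ?_, ?_⟩
    · intro h
      apply hzx
      rw [← ez, h, ex]
    · intro h
      apply hzy
      rw [← ez, h, mul_add, ex, mul_one, ey]
    · grind
  · rintro ⟨a, x, z⟩ hp
    simp only [Finset.coe_product, Set.mem_prod, Finset.mem_coe, Finset.mem_erase,
      Finset.mem_univ, Finset.mem_filter, true_and, and_true] at hp
    obtain ⟨ha, hzx, hzx1, hs⟩ := hp
    simp only [Finset.coe_filter, Finset.mem_univ, true_and, Set.mem_ofPred_eq]
    refine ⟨by grind, ?_, ?_, ?_⟩
    · intro h; exact hzx (mul_left_cancel₀ ha h)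
    · intro h
      apply hzx1
      apply mul_left_cancel₀ ha
      rw [h]; ring
    · rw [key, hs, CharTwo.add_self_eq_zero, mul_zero]
  · rintro ⟨x, y, z⟩ hp
    simp only [Finset.coe_filter, Finset.mem_univ, true_and, Set.mem_ofPred_eq] at hp
    have ha : x + y ≠ 0 := by grind
    have ex : (x + y) * (x / (x + y)) = x := mul_div_cancel₀ _ ha
    have ez : (x + y) * (z / (x + y)) = z := mul_div_cancel₀ _ ha
    have ey : x + (x + y) = y := by grind
    simp only [ex, ez, ey]
  · rintro ⟨a, x, z⟩ hp
    simp only [Finset.coe_product, Set.mem_prod, Finset.mem_coe, Finset.mem_erase,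
      Finset.mem_univ, Finset.mem_filter, true_and, and_true] at hp
    have ha : a ≠ 0 := hp.1
    have e : a * x + (a * x + a) = a := by grind
    simp only [e, mul_div_cancel_left₀ _ ha]

end Flats

lemma kloosterman_eq (m : ℕ) [Fintype (GaloisField 2 (2 * m + 1))] :
    kloosterman (2 * m + 1) =
      ∑ x : GaloisField 2 (2 * m + 1), traceChar m (x⁻¹ + x) := by
  unfold kloosterman
  refine Finset.sum_congr (by ext; simp) fun x _ => ?_
  have h := FiniteField.algebraMap_trace_eq_sum_pow (ZMod 2) (GaloisField 2 (2 * m + 1)) (x⁻¹ + x)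
  rw [GaloisField.finrank 2 (by omega), Nat.card_zmod] at h
  unfold traceChar partialTrace
  rw [← h]
  generalize Algebra.trace (ZMod 2) (GaloisField 2 (2 * m + 1)) (x⁻¹ + x) = t
  obtain rfl | rfl : t = 0 ∨ t = 1 := by revert t; decide
  · rw [map_zero, if_pos rfl, ZMod.val_zero, pow_zero]
  · rw [map_one, if_neg one_ne_zero, ZMod.val_one, pow_one]

theorem card_vanishingFlats_pow_two_pow_m_sub_one_odd_dim (m : ℕ) (hm : 0 < m)
    (F : GaloisField 2 (2 * m + 1) → GaloisField 2 (2 * m + 1))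
    (hF : ∀ X, F X = X ^ (2 ^ m - 1)) :
    (m % 3 = 1 → (Nat.card (vanishingFlats F) : ℚ) =
      ((2 ^ (2 * m + 1 - 2) + 7) / 6 - (kloosterman (2 * m + 1) : ℚ) / 8) *
        (2 ^ (2 * m + 1) - 1)) ∧
    (m % 3 ≠ 1 → (Nat.card (vanishingFlats F) : ℚ) =
      ((2 ^ (2 * m + 1 - 2) + 1) / 6 - (kloosterman (2 * m + 1) : ℚ) / 8) *
        (2 ^ (2 * m + 1) - 1)) := by
  let _ : Fintype (GaloisField 2 (2 * m + 1)) := Fintype.ofFinite _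
  have hcard : Fintype.card (GaloisField 2 (2 * m + 1)) = 2 ^ (2 * m + 1) := by
    rw [← Nat.card_eq_fintype_card, GaloisField.card 2 _ (by omega)]
  have hfr (a : GaloisField 2 (2 * m + 1)) : a ^ 2 ^ (2 * m + 1) = a := by
    rw [← hcard]; exact FiniteField.pow_card a
  have h1 := flats_card_mul F
  rw [triples_card F hF, pairs_card hm hfr, base_fibre_card hcard hfr, hcard] at h1
  have h2 := card_fullFibre hfr hcard
  rw [← kloosterman_eq] at h2
  generalize (Finset.univ.filter fun x : GaloisField 2 (2 * m + 1) =>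
    x ≠ 0 ∧ x ≠ 1 ∧ FullFibre m x).card = c at *
  have h2q : 4 * (c : ℚ) = 2 ^ (2 * m + 1) + 4 - 3 * (kloosterman (2 * m + 1) : ℚ) := by
    exact_mod_cast h2
  have h1q : (Nat.card (vanishingFlats F) : ℚ) * 24 =
      (2 ^ (2 * m + 1) - 1) * (4 * (if m % 3 = 1 then 6 else 0) + 4 * (c : ℚ)) := by
    have := congrArg (Nat.cast : ℕ → ℚ) h1
    push_cast [Nat.cast_sub (Nat.one_le_two_pow (n := 2 * m + 1))] at this
    exact this
  have hp : (2 : ℚ) ^ (2 * m + 1) = 4 * 2 ^ (2 * m + 1 - 2) := by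
    rw [show 2 * m + 1 = 2 * m + 1 - 2 + 2 by omega, pow_add, Nat.add_sub_cancel]; ring
  rw [h2q] at h1q
  constructor
  · intro h
    rw [if_pos h] at h1q
    rw [hp] at h1q ⊢
    linear_combination h1q / 24
  · intro h
    rw [if_neg h] at h1q
    rw [hp] at h1q ⊢
    linear_combination h1q / 24
end

section
/- Let n be an even positive integer and define F : F_{2^n} → F_{2^n} by F(X) = X^{-1} + Tr(X²·(X+1)^{-1}), where the trace value in F_2 is viewed as an element of F_{2^n} via the subfield embedding F_2 ⊆ F_{2^n}, and the convention 0^{-1} = 0 is used. Then for all a, b ∈ F_{2^n}: if ab = 0 or a = b then ∇_F(a,b) = 2^n, and if ab ≠ 0 and a ≠ b then ∇_F(a,b) ∈ {0, 4, 8}. In particular, the Feistel boomerang uniformity of F is at most 8. -/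
/-!
Write `V = {0, a, b, a + b}`. The solution set of the second-order equation is stable under
translation by `V`, so it is a union of cosets of `V`. The trace part of the equation is `0` or `1`.
If `a, b, a + b` are nonzero and `X ∉ V`, then with `L(X) = X (X + a) (X + b) (X + a + b)` the
inverse part equals `L'(X) / L(X) = a b (a + b) / L(X)`, which is nonzero; hence a solution outside
`V` satisfies `L(X) = a b (a + b)`. As `L` is additive with kernel `V`, such solutions lie in a
single coset of `V` (`solution_unique_coset`). The solution set is therefore contained in the union
of `V` and at most one further coset, and has `0`, `4` or `8` elements (`card_solutions`). The
degenerate cases `a b = 0` or `a = b` are immediate, since the four terms cancel in pairs.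
-/

open scoped Classical

/-- The second-order zero differential spectrum (FBCT entry) of `F` at `(a, b)` in
characteristic 2: the number of `X` with `F(X+a+b) + F(X+b) + F(X+a) + F(X) = 0`. -/
noncomputable def FBCT {K : Type*} [Field K] (F : K → K) (a b : K) : ℕ :=
  Nat.card {X : K | F (X + a + b) + F (X + b) + F (X + a) + F X = 0}

section helpers

variable {K : Type*} [Field K]

/-- The coset `x + {0, a, b, a + b}`. -/
noncomputable def vCoset (a b x : K) : Finset K := {x, x + a, x + b, x + a + b}

theorem mem_vCoset {a b x y : K} :
    y ∈ vCoset a b x ↔ y = x ∨ y = x + a ∨ y = x + b ∨ y = x + a + b := by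
  simp [vCoset]

variable [CharP K 2]

theorem two_zero : (2 : K) = 0 := CharTwo.two_eq_zero

theorem card_vCoset {a b : K} (ha : a ≠ 0) (hb : b ≠ 0) (hab : a ≠ b) (x : K) :
    (vCoset a b x).card = 4 := by
  have h2 : (2 : K) = 0 := two_zero
  have h : a + b ≠ 0 := fun h => hab (CharTwo.add_eq_zero.mp h)
  have hne1 : x ≠ x + a + b := fun e => h (by linear_combination -e)
  have hne2 : x + a ≠ x + b := fun e => hab (by linear_combination e)
  unfold vCoset
  rw [Finset.card_insert_of_notMem, Finset.card_insert_of_notMem, Finset.card_insert_of_notMem,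
    Finset.card_singleton]
  · simp only [Finset.mem_singleton]
    exact fun e => ha (by linear_combination -e)
  · simp only [Finset.mem_insert, Finset.mem_singleton, not_or]
    exact ⟨hne2, fun e => hb (by linear_combination -e)⟩
  · simp only [Finset.mem_insert, Finset.mem_singleton, not_or]
    exact ⟨fun e => ha (by linear_combination -e), fun e => hb (by linear_combination -e), hne1⟩

/-- The partial fraction identity `∑ 1 / (x + v) = L'(x) / L(x)`, specialised to a value in
`{0, 1}`; the value `0` is excluded because `L' = a b (a + b)` is a nonzero constant. -/
theorem prod_eq_of_inv_sum {a b x t : K} (ha : a ≠ 0) (hb : b ≠ 0) (hab : a ≠ b)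
    (hx : x ∉ vCoset a b 0) (ht : t = 0 ∨ t = 1)
    (h : (x + a + b)⁻¹ + (x + b)⁻¹ + (x + a)⁻¹ + x⁻¹ = t) :
    x * (x + a) * (x + b) * (x + a + b) = a * b * (a + b) := by
  have h2 : (2 : K) = 0 := two_zero
  have hs : a + b ≠ 0 := fun h => hab (CharTwo.add_eq_zero.mp h)
  simp only [mem_vCoset, zero_add, not_or] at hx
  obtain ⟨h0, h1, h3, h4⟩ := hx
  have e1 : x + a ≠ 0 := fun e => h1 (CharTwo.add_eq_zero.mp e)
  have e3 : x + b ≠ 0 := fun e => h3 (CharTwo.add_eq_zero.mp e)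
  have e4 : x + a + b ≠ 0 := fun e => h4 (CharTwo.add_eq_zero.mp (by rw [← e]; ring))
  have key : t * (x * (x + a) * (x + b) * (x + a + b)) = a * b * (a + b) := by
    rw [← h]
    field_simp
    linear_combination (2*x^3 + 3*x^2*(a+b) + x*(a^2+b^2+3*a*b)) * h2
  rcases ht with rfl | rfl
  · rw [zero_mul] at key
    exact absurd key.symm (mul_ne_zero (mul_ne_zero ha hb) hs)
  · rwa [one_mul] at key

/-- A fibre of the additive polynomial `L` lies in one coset of its kernel. -/
theorem solution_unique_coset {a b x y : K}
    (h : x * (x + a) * (x + b) * (x + a + b) = y * (y + a) * (y + b) * (y + a + b)) :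
    y ∈ vCoset a b x := by
  have h2 : (2 : K) = 0 := two_zero
  have key : (y - x) * (y - (x + a)) * (y - (x + b)) * (y - (x + a + b)) = 0 := by
    grind
  rw [mem_vCoset]
  simpa only [mul_eq_zero, sub_eq_zero, or_assoc] using key

/-- A set stable under translation by `{0, a, b, a + b}` and meeting at most one coset other than
`{0, a, b, a + b}` itself has `0`, `4` or `8` elements. -/
theorem card_solutions {a b : K} (ha : a ≠ 0) (hb : b ≠ 0) (hab : a ≠ b)
    (S : Set K) (hinv : ∀ x ∈ S, ∀ y ∈ vCoset a b x, y ∈ S)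
    (huniq : ∀ x ∈ S, x ∉ vCoset a b 0 → ∀ y ∈ S, y ∉ vCoset a b 0 → y ∈ vCoset a b x) :
    Nat.card S = 0 ∨ Nat.card S = 4 ∨ Nat.card S = 8 := by
  have h2 : (2 : K) = 0 := two_zero
  have hsymm : ∀ x y : K, y ∈ vCoset a b x → x ∈ vCoset a b y := by
    intro x y h
    rw [mem_vCoset] at h ⊢
    rcases h with h | h | h | h
    · exact Or.inl h.symm
    · exact Or.inr (Or.inl (by linear_combination -h - a * h2))
    · exact Or.inr (Or.inr (Or.inl (by linear_combination -h - b * h2)))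
    · exact Or.inr (Or.inr (Or.inr (by linear_combination -h - (a + b) * h2)))
  have hcard : ∀ T : Finset K, S = ↑T → Nat.card S = T.card := by
    rintro T rfl
    simp
  have h0 : (0 : K) ∈ vCoset a b 0 := by simp [mem_vCoset]
  have hV : ∀ y ∈ S, y ∈ vCoset a b 0 → (0 : K) ∈ S :=
    fun y hy hy0 => hinv y hy 0 (hsymm _ _ hy0)
  by_cases hz : (0 : K) ∈ S <;> by_cases hex : ∃ x ∈ S, x ∉ vCoset a b 0
  · obtain ⟨x, hx, hxV⟩ := hex
    right; right
    rw [hcard (vCoset a b 0 ∪ vCoset a b x), Finset.card_union_of_disjoint,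
      card_vCoset ha hb hab, card_vCoset ha hb hab]
    · rw [Finset.disjoint_left]
      intro y hy hyx
      apply hxV
      rw [mem_vCoset] at hy hyx ⊢
      grind
    · ext y
      simp only [Finset.coe_union, Set.mem_union, Finset.mem_coe]
      constructor
      · intro hy
        by_cases hyV : y ∈ vCoset a b 0
        · exact Or.inl hyV
        · exact Or.inr (huniq x hx hxV y hy hyV)
      · rintro (hy | hy)
        · exact hinv 0 hz y hy
        · exact hinv x hx y hy
  · push Not at hex
    right; left
    rw [hcard (vCoset a b 0), card_vCoset ha hb hab]
    ext y
    exact ⟨hex y, hinv 0 hz y⟩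
  · obtain ⟨x, hx, hxV⟩ := hex
    right; left
    rw [hcard (vCoset a b x), card_vCoset ha hb hab]
    ext y
    exact ⟨fun hy => huniq x hx hxV y hy fun hyV => hz (hV y hy hyV), hinv x hx y⟩
  · push Not at hex
    left
    rw [hcard ∅, Finset.card_empty]
    ext y
    simp only [Finset.coe_empty, Set.mem_empty_iff_false, iff_false]
    exact fun hy => hz (hV y hy (hex y hy))

end helpers

theorem FBCT_inverse_plus_trace (n : ℕ) (hn0 : 0 < n) (hn : Even n)
    (F : GaloisField 2 n → GaloisField 2 n)
    (hF : ∀ X, F X = X⁻¹ + algebraMap (ZMod 2) (GaloisField 2 n)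
      (Algebra.trace (ZMod 2) (GaloisField 2 n) (X ^ 2 * (X + 1)⁻¹))) :
    (∀ a b : GaloisField 2 n,
      ((a * b = 0 ∨ a = b) → FBCT F a b = 2 ^ n) ∧
      (a * b ≠ 0 → a ≠ b → FBCT F a b ∈ ({0, 4, 8} : Set ℕ))) ∧
    (∀ a b : GaloisField 2 n, a ≠ 0 → b ≠ 0 → a ≠ b → FBCT F a b ≤ 8) := by
  have h2 : (2 : GaloisField 2 n) = 0 := two_zero
  have hdbl : ∀ x : GaloisField 2 n, x + x = 0 := CharTwo.add_self_eq_zero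
  have hmain : ∀ a b : GaloisField 2 n, a ≠ 0 → b ≠ 0 → a ≠ b →
      FBCT F a b = 0 ∨ FBCT F a b = 4 ∨ FBCT F a b = 8 := by
    intro a b ha hb hab
    have hL : ∀ x ∈ {X | F (X + a + b) + F (X + b) + F (X + a) + F X = 0},
        x ∉ vCoset a b 0 → x * (x + a) * (x + b) * (x + a + b) = a * b * (a + b) := by
      intro x hx hxV
      simp only [Set.mem_ofPred_eq, hF] at hx
      generalize Algebra.trace (ZMod 2) (GaloisField 2 n) ((x + a + b) ^ 2 * _) = t1 at hx
      generalize Algebra.trace (ZMod 2) (GaloisField 2 n) ((x + b) ^ 2 * _) = t2 at hx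
      generalize Algebra.trace (ZMod 2) (GaloisField 2 n) ((x + a) ^ 2 * _) = t3 at hx
      generalize Algebra.trace (ZMod 2) (GaloisField 2 n) (x ^ 2 * _) = t4 at hx
      have ht : algebraMap (ZMod 2) (GaloisField 2 n) (-(t1 + t2 + t3 + t4)) = 0 ∨
          algebraMap (ZMod 2) (GaloisField 2 n) (-(t1 + t2 + t3 + t4)) = 1 := by
        have : ∀ t : ZMod 2, t = 0 ∨ t = 1 := by decide
        rcases this (-(t1 + t2 + t3 + t4)) with h | h <;> simp [h]
      refine prod_eq_of_inv_sum ha hb hab hxV ht ?_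
      simp only [map_add, map_neg]
      linear_combination hx
    refine card_solutions ha hb hab _ ?_ fun x hx hxV y hy hyV =>
      solution_unique_coset ((hL x hx hxV).trans (hL y hy hyV).symm)
    intro x hx y hy
    simp only [Set.mem_ofPred_eq] at hx ⊢
    rw [mem_vCoset] at hy
    have ea : ∀ z : GaloisField 2 n, z + a + a = z := fun z => by linear_combination a * h2
    have eb : ∀ z : GaloisField 2 n, z + b + b = z := fun z => by linear_combination b * h2
    have ec : x + b + a = x + a + b := by ring
    have ed : x + a + b + a = x + b := by linear_combination a * h2
    rcases hy with rfl | rfl | rfl | rfl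
    · exact hx
    all_goals
      simp only [ea, eb, ec, ed]
      linear_combination hx
  refine ⟨fun a b => ⟨?_, ?_⟩, ?_⟩
  · intro h
    have hall : {X | F (X + a + b) + F (X + b) + F (X + a) + F X = 0} = Set.univ := by
      ext x
      simp only [Set.mem_ofPred_eq, Set.mem_univ, iff_true]
      rcases h with h | rfl
      · rcases mul_eq_zero.mp h with rfl | rfl
        · simp only [add_zero]
          linear_combination hdbl (F (x + b)) + hdbl (F x)
        · simp only [add_zero]
          linear_combination hdbl (F (x + a)) + hdbl (F x)
      · have e : x + a + a = x := by linear_combination a * h2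
        rw [e]
        linear_combination hdbl (F (x + a)) + hdbl (F x)
    unfold FBCT
    rw [hall, Nat.card_univ, GaloisField.card 2 n hn0.ne']
  · intro h hab
    simpa using hmain a b (left_ne_zero_of_mul h) (right_ne_zero_of_mul h) hab
  · intro a b ha hb hab
    rcases hmain a b ha hb hab with h | h | h <;> omega
end

section
/- Let t and n be positive integers with t < n, and let γ ∈ F_{2^n} be a nonzero element satisfying γ^{2^{2t}} = γ (i.e. γ ∈ F_{2^n} ∩ F_{2^{2t}}^*) and Tr(γ^{2^t + 1}) = 0. Define F : F_{2^n} → F_{2^n} by F(X) = (X + γ·Tr(X^{2^t+1}))^{-1}, where the trace value in F_2 is viewed as an element of F_{2^n} via the subfield embedding F_2 ⊆ F_{2^n}, and the convention 0^{-1} = 0 is used. Then for all a, b ∈ F_{2^n} with ab ≠ 0 and a ≠ b, ∇_F(a,b) ∈ {0, 4, 8}. Consequently, the Feistel boomerang uniformity of F is at most 8. -/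
/-!
Write `f X = Tr (X ^ (2 ^ t + 1))` and `L X = X + γ f X`, so that `F X = (L X)⁻¹`. The hypotheses on
`γ` say that the quadratic form `f` is invariant under translation by `γ`; since `f` takes values in
`{0, 1}`, the map `L` is an involution and in particular injective, with `L 0 = 0`.

Let `V = {0, a, b, a + b}`, a subgroup of order four. The solution set `S` is a union of cosets of
`V`, so it suffices to show that it contains at most one coset besides `V` itself. Let `X ∈ S \ V`;
then `L` is nonzero at the four points of `X + V` and takes four distinct values `y₁, …, y₄` there,
whose inverses sum to zero.

* If `f` sums to zero on `X + V`, then also `∑ yᵢ = 0`, and clearing denominators gives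
  `(y₁ + y₂) (y₂ + y₃) (y₁ + y₃) = 0`, which is impossible (`no_flat_solution`).
* Otherwise `f` takes one value at a single point `W` of the coset and the other value at the other
  three. With `Z = W + γ (1 + f W)` the equation becomes
  `1 / (Z + γ) + 1 / (Z + a) + 1 / (Z + b) + 1 / (Z + a + b) = 0`, whose numerator collapses to
  `γ Z² + ab(a + b) + γ (a² + ab + b²)` (`odd_point_equation`). Hence `Z` is determined by `a, b, γ`.
  As `f Z = f W`, so is `W`, and thereby the coset.
-/

open scoped Classical

section Combinatorial

variable {K : Type*} [Field K] [CharP K 2]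

/-- Over a field of characteristic two, the inverses of four nonzero elements with sum zero, the
first three of them distinct, do not sum to zero. -/
lemma no_flat_solution (x y z w : K) (hx : x ≠ 0) (hy : y ≠ 0) (hz : z ≠ 0) (hw : w ≠ 0)
    (hxy : x ≠ y) (hxz : x ≠ z) (hyz : y ≠ z) (hs : x + y + z + w = 0)
    (hi : x⁻¹ + y⁻¹ + z⁻¹ + w⁻¹ = 0) : False := by
  have h2 : (2 : K) = 0 := CharTwo.two_eq_zero
  have h : (x - y) * (y - z) * (x - z) = 0 := by
    field_simp at hi
    grind
  have := sub_ne_zero.2 hxy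
  have := sub_ne_zero.2 hxz
  have := sub_ne_zero.2 hyz
  simp_all

lemma odd_point_equation (a b γ Z : K) (h0 : Z + γ ≠ 0) (h1 : Z + a ≠ 0) (h2 : Z + b ≠ 0)
    (h3 : Z + a + b ≠ 0) (hi : (Z + a + b)⁻¹ + (Z + b)⁻¹ + (Z + a)⁻¹ + (Z + γ)⁻¹ = 0) :
    γ * Z ^ 2 = a * b * (a + b) + γ * (a ^ 2 + a * b + b ^ 2) := by
  have htwo : (2 : K) = 0 := CharTwo.two_eq_zero
  field_simp at hi
  grind

/-- `f` takes at `X` a value different from its common value on the rest of `X + {0, a, b, a + b}`. -/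
def IsOddPoint (f : K → K) (a b X : K) : Prop :=
  f (X + a) = f X + 1 ∧ f (X + b) = f X + 1 ∧ f (X + a + b) = f X + 1

variable (f : K → K) (γ : K)

lemma odd_point_unique (hγ0 : γ ≠ 0) (hf : ∀ x, f x = 0 ∨ f x = 1) (hfγ : ∀ x, f (x + γ) = f x)
    (a b X X' : K)
    (hX : IsOddPoint f a b X) (hX' : IsOddPoint f a b X')
    (hL : ∀ Y, Y = X ∨ Y = X' → Y + γ * f Y ≠ 0 ∧ (Y + a) + γ * f (Y + a) ≠ 0 ∧
      (Y + b) + γ * f (Y + b) ≠ 0 ∧ (Y + a + b) + γ * f (Y + a + b) ≠ 0)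
    (hS : ∀ Y, Y = X ∨ Y = X' → ((Y + a + b) + γ * f (Y + a + b))⁻¹ + ((Y + b) + γ * f (Y + b))⁻¹ +
      ((Y + a) + γ * f (Y + a))⁻¹ + (Y + γ * f Y)⁻¹ = 0) : X = X' := by
  have htwo : (2 : K) = 0 := CharTwo.two_eq_zero
  have key : ∀ Y, Y = X ∨ Y = X' → IsOddPoint f a b Y →
      γ * (Y + γ * (1 + f Y)) ^ 2 = a * b * (a + b) + γ * (a ^ 2 + a * b + b ^ 2) := by
    intro Y hY ⟨o1, o2, o3⟩
    obtain ⟨l0, l1, l2, l3⟩ := hL Y hY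
    have s := hS Y hY
    rw [o1] at l1 s
    rw [o2] at l2 s
    rw [o3] at l3 s
    have e0 : Y + γ * f Y = Y + γ * (1 + f Y) + γ := by grind
    have e1 : Y + a + γ * (f Y + 1) = Y + γ * (1 + f Y) + a := by ring
    have e2 : Y + b + γ * (f Y + 1) = Y + γ * (1 + f Y) + b := by ring
    have e3 : Y + a + b + γ * (f Y + 1) = Y + γ * (1 + f Y) + a + b := by ring
    rw [e0] at l0 s
    rw [e1] at l1 s
    rw [e2] at l2 s
    rw [e3] at l3 s
    exact odd_point_equation a b γ _ l0 l1 l2 l3 s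
  have hZ : X + γ * (1 + f X) = X' + γ * (1 + f X') := by
    have h := (key X (.inl rfl) hX).trans (key X' (.inr rfl) hX').symm
    exact CharTwo.sq_injective (mul_left_cancel₀ hγ0 h)
  have hfZ : ∀ x, f (x + γ * (1 + f x)) = f x := by
    intro x
    rcases hf x with h | h <;> simp [h, hfγ, CharTwo.add_self_eq_zero]
  have hff : f X = f X' := by rw [← hfZ X, hZ, hfZ]
  rw [hff] at hZ
  exact add_right_cancel hZ

/-- The counting statement for any `{0, 1}`-valued, `γ`-periodic `f` vanishing at zero. -/
lemma FBCT_of_periodic (hγ0 : γ ≠ 0) (hf : ∀ x, f x = 0 ∨ f x = 1) (hf0 : f 0 = 0)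
    (hfγ : ∀ x, f (x + γ) = f x) (F : K → K) (hF : ∀ X, F X = (X + γ * f X)⁻¹)
    (a b : K) (ha : a ≠ 0) (hb : b ≠ 0) (hab : a ≠ b) :
    FBCT F a b ∈ ({0, 4, 8} : Set ℕ) := by
  have htwo : (2 : K) = 0 := CharTwo.two_eq_zero
  have hLL : ∀ x, (x + γ * f x) + γ * f (x + γ * f x) = x := by
    intro x
    rcases hf x with h | h
    · simp [h]
    · simp only [h, mul_one, hfγ]; grind
  have hinj : ∀ x y, x + γ * f x = y + γ * f y → x = y := by
    intro x y h
    rw [← hLL x, h, hLL y]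
  have hL0 : ∀ x, x ≠ 0 → x + γ * f x ≠ 0 := by
    intro x hx h
    exact hx (hinj x 0 (by simpa [hf0] using h))
  have hab0 : a + b ≠ 0 := fun h => hab (by grind)
  set S : Set K := {X : K | F (X + a + b) + F (X + b) + F (X + a) + F X = 0} with hSdef
  -- `C W` is the coset of `{0, a, b, a + b}` through `W`.
  let C : K → Finset K := fun W => {W, W + a, W + b, W + a + b}
  have hC : ∀ W X, X ∈ C W ↔ X = W ∨ X = W + a ∨ X = W + b ∨ X = W + a + b := by
    intro W X; simp [C]
  have hCcard : ∀ W, (C W).card = 4 := by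
    intro W
    have : W + a ≠ W + b := by simpa using hab
    have : W + a ≠ W + a + b := by simpa using hb
    have : W + b ≠ W + a + b := by intro h; apply ha; grind
    have : W ≠ W + a + b := by intro h; apply hab0; grind
    have : W ≠ W + a := by simpa using ha
    have : W ≠ W + b := by simpa using hb
    simp [C, *]
  have hSa : ∀ X, X ∈ S → X + a ∈ S := by
    intro X hX
    have e1 : X + a + a = X := by grind
    simp only [hSdef, Set.mem_ofPred_eq] at hX ⊢
    rw [e1, ← hX]; ring
  have hSb : ∀ X, X ∈ S → X + b ∈ S := by
    intro X hX
    have e1 : X + b + b = X := by grind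
    have e2 : X + b + a = X + a + b := by ring
    have e3 : X + a + b + b = X + a := by grind
    simp only [hSdef, Set.mem_ofPred_eq] at hX ⊢
    rw [e2, e3, e1, ← hX]; ring
  have hSC : ∀ W, W ∈ S → ∀ X ∈ C W, X ∈ S := by
    intro W hW X hX
    rcases (hC W X).1 hX with rfl | rfl | rfl | rfl
    exacts [hW, hSa _ hW, hSb _ hW, hSb _ (hSa _ hW)]
  have hCsymm : ∀ W X, X ∈ C W → W ∈ C X := by
    intro W X hX
    rw [hC] at hX ⊢
    rcases hX with rfl | rfl | rfl | rfl <;> grind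
  have hCtrans : ∀ W X Y, X ∈ C W → Y ∈ C X → Y ∈ C W := by
    intro W X Y hX hY
    rw [hC] at hX hY ⊢
    rcases hX with rfl | rfl | rfl | rfl <;> rcases hY with rfl | rfl | rfl | rfl <;> grind
  have hne : ∀ X, X ∉ C 0 → X + γ * f X ≠ 0 ∧ (X + a) + γ * f (X + a) ≠ 0 ∧
      (X + b) + γ * f (X + b) ≠ 0 ∧ (X + a + b) + γ * f (X + a + b) ≠ 0 := by
    intro X hX
    rw [hC] at hX
    refine ⟨hL0 _ ?_, hL0 _ ?_, hL0 _ ?_, hL0 _ ?_⟩ <;> intro h <;> apply hX <;> grind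
  have hodd : ∀ X, X ∈ S → X ∉ C 0 → ∃ W ∈ C X, IsOddPoint f a b W := by
    intro X hXS hX
    obtain ⟨l0, l1, l2, l3⟩ := hne X hX
    have hflat : f X + f (X + a) + f (X + b) + f (X + a + b) ≠ 0 := by
      intro h
      simp only [hSdef, Set.mem_ofPred_eq, hF] at hXS
      refine no_flat_solution _ _ _ _ l0 l1 l2 l3 (fun h => ?_) (fun h => ?_) (fun h => ?_)
        ?_ (by rw [← hXS]; ring)
      · exact ha (by simpa using hinj _ _ h)
      · exact hb (by simpa using hinj _ _ h)
      · exact hab (by simpa using hinj _ _ h)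
      · linear_combination γ * h + (2 * X + a + b) * htwo
    have a1 : X + a + a = X := by grind
    have a2 : X + b + a = X + a + b := by ring
    have a3 : X + b + b = X := by grind
    have a4 : X + a + b + a = X + b := by grind
    have a5 : X + a + b + b = X + a := by grind
    have t1 : (1 : K) + 1 = 0 := by grind
    have : IsOddPoint f a b X ∨ IsOddPoint f a b (X + a) ∨ IsOddPoint f a b (X + b) ∨
        IsOddPoint f a b (X + a + b) := by
      simp only [IsOddPoint, a1, a2, a3, a4, a5]
      rcases hf X with h0 | h0 <;> rcases hf (X + a) with h1 | h1 <;>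
        rcases hf (X + b) with h2 | h2 <;> rcases hf (X + a + b) with h3 | h3 <;>
        simp [h0, h1, h2, h3, t1] at hflat ⊢
    rcases this with h | h | h | h
    exacts [⟨_, by simp [C], h⟩, ⟨_, by simp [C], h⟩, ⟨_, by simp [C], h⟩, ⟨_, by simp [C], h⟩]
  have hcoset : ∀ X X', X ∈ S → X' ∈ S → X ∉ C 0 → X' ∉ C 0 → X' ∈ C X := by
    intro X X' hX hX' h0 h0'
    obtain ⟨W, hW, hWo⟩ := hodd X hX h0
    obtain ⟨W', hW', hWo'⟩ := hodd X' hX' h0'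
    have hWW : W = W' := by
      apply odd_point_unique f γ hγ0 hf hfγ a b W W' hWo hWo'
      · rintro Y (rfl | rfl)
        · exact hne _ fun h => h0 (hCtrans _ _ _ h (hCsymm _ _ hW))
        · exact hne _ fun h => h0' (hCtrans _ _ _ h (hCsymm _ _ hW'))
      · rintro Y (rfl | rfl)
        · simpa [hSdef, hF] using hSC _ hX _ hW
        · simpa [hSdef, hF] using hSC _ hX' _ hW'
    subst hWW
    exact hCtrans _ _ _ hW (hCsymm _ _ hW')
  have hcard : ∀ T : Finset K, S = T → FBCT F a b = T.card := by
    intro T hT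
    change Nat.card S = _
    rw [hT]; simp
  have hmem0 : ∀ X ∈ C 0, X ∈ S → 0 ∈ S := fun X hX hS => hSC X hS 0 (hCsymm _ _ hX)
  by_cases h0 : (0 : K) ∈ S <;> by_cases h1 : ∃ W ∈ S, W ∉ C 0
  · obtain ⟨W, hWS, hW⟩ := h1
    have : S = ((C 0 ∪ C W : Finset K) : Set K) := by
      ext X
      rw [Finset.mem_coe, Finset.mem_union]
      refine ⟨fun h => ?_, ?_⟩
      · by_cases hX : X ∈ C 0
        · exact .inl hX
        · exact .inr (hcoset W X hWS h hW hX)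
      · rintro (h | h)
        exacts [hSC _ h0 _ h, hSC _ hWS _ h]
    rw [hcard _ this, Finset.card_union_of_disjoint, hCcard, hCcard]
    · simp
    · rw [Finset.disjoint_left]
      exact fun X hX hX' => hW (hCtrans _ _ _ hX (hCsymm _ _ hX'))
  · push Not at h1
    have : S = (C 0 : Set K) := by
      ext X
      exact ⟨h1 X, hSC _ h0 X⟩
    rw [hcard _ this, hCcard]; simp
  · obtain ⟨W, hWS, hW⟩ := h1
    have : S = (C W : Set K) := by
      ext X
      exact ⟨fun h => hcoset W X hWS h hW fun hX => h0 (hmem0 X hX h), hSC _ hWS X⟩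
    rw [hcard _ this, hCcard]; simp
  · push Not at h1
    have : S = ((∅ : Finset K) : Set K) := by
      ext X
      simpa using fun h => h0 (hmem0 X (h1 X h) h)
    rw [hcard _ this]; simp

end Combinatorial

lemma trace_pow_two_pow (n k : ℕ) (x : GaloisField 2 n) :
    Algebra.trace (ZMod 2) (GaloisField 2 n) (x ^ 2 ^ k) =
      Algebra.trace (ZMod 2) (GaloisField 2 n) x := by
  induction k with
  | zero => simp
  | succ k ih =>
    rw [← ih, pow_succ, pow_mul]
    have := Algebra.trace_eq_of_algEquiv
      (FiniteField.frobeniusAlgEquivOfAlgebraic (ZMod 2) (GaloisField 2 n)) (x ^ 2 ^ k)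
    simpa using this

/-- The polar form of `Tr (X ^ (2 ^ t + 1))` vanishes at `γ`: its two terms
`Tr (x ^ 2 ^ t * γ)` and `Tr (x * γ ^ 2 ^ t)` are Frobenius conjugate because `γ ^ 2 ^ (2 * t) = γ`. -/
lemma trace_form_periodic (n t : ℕ) (γ : GaloisField 2 n) (hγ : γ ^ 2 ^ (2 * t) = γ)
    (hγtr : Algebra.trace (ZMod 2) (GaloisField 2 n) (γ ^ (2 ^ t + 1)) = 0)
    (x : GaloisField 2 n) :
    Algebra.trace (ZMod 2) (GaloisField 2 n) ((x + γ) ^ (2 ^ t + 1)) =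
      Algebra.trace (ZMod 2) (GaloisField 2 n) (x ^ (2 ^ t + 1)) := by
  have h1 : (x + γ) ^ (2 ^ t + 1) =
      x ^ (2 ^ t + 1) + x ^ 2 ^ t * γ + x * γ ^ 2 ^ t + γ ^ (2 ^ t + 1) := by
    rw [pow_succ, add_pow_char_pow]; ring
  have h2 : (x * γ ^ 2 ^ t) ^ 2 ^ t = x ^ 2 ^ t * γ := by
    rw [mul_pow, ← pow_mul, ← pow_add, ← two_mul, hγ]
  rw [h1, map_add, map_add, map_add, hγtr, ← trace_pow_two_pow n t (x * γ ^ 2 ^ t), h2, add_zero,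
    add_assoc, CharTwo.add_self_eq_zero, add_zero]

theorem FBCT_inverse_of_linearized (n t : ℕ) (ht : 0 < t) (htn : t < n)
    (γ : GaloisField 2 n) (hγ0 : γ ≠ 0) (hγ : γ ^ 2 ^ (2 * t) = γ)
    (hγtr : Algebra.trace (ZMod 2) (GaloisField 2 n) (γ ^ (2 ^ t + 1)) = 0)
    (F : GaloisField 2 n → GaloisField 2 n)
    (hF : ∀ X, F X = (X + γ * algebraMap (ZMod 2) (GaloisField 2 n)
      (Algebra.trace (ZMod 2) (GaloisField 2 n) (X ^ (2 ^ t + 1))))⁻¹) :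
    (∀ a b : GaloisField 2 n, a * b ≠ 0 → a ≠ b →
      FBCT F a b ∈ ({0, 4, 8} : Set ℕ)) ∧
    (∀ a b : GaloisField 2 n, a ≠ 0 → b ≠ 0 → a ≠ b → FBCT F a b ≤ 8) := by
  have main : ∀ a b : GaloisField 2 n, a ≠ 0 → b ≠ 0 → a ≠ b →
      FBCT F a b ∈ ({0, 4, 8} : Set ℕ) := by
    intro a b ha hb hab
    refine FBCT_of_periodic (fun X => algebraMap (ZMod 2) (GaloisField 2 n)
      (Algebra.trace (ZMod 2) (GaloisField 2 n) (X ^ (2 ^ t + 1)))) γ hγ0 ?_ ?_ ?_ F hF a b ha hb hab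
    · intro x
      have h : ∀ c : ZMod 2, c = 0 ∨ c = 1 := by decide
      rcases h (Algebra.trace (ZMod 2) (GaloisField 2 n) (x ^ (2 ^ t + 1))) with h | h <;> simp [h]
    · simp
    · intro x
      simp only [trace_form_periodic n t γ hγ hγtr x]
  refine ⟨fun a b h hab => main a b (left_ne_zero_of_mul h) (right_ne_zero_of_mul h) hab,
    fun a b ha hb hab => ?_⟩
  have h := main a b ha hb hab
  simp only [Set.mem_insert_iff, Set.mem_singleton_iff] at h
  omega
end
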